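/- Let X be a locally compact Hausdorff space, H a Hilbert space, and φ ↦ φ(Q) a nondegenerate *-homomorphism from C₀(X) into B(H). Let R be a bounded self-adjoint operator on H such that (i) φ(Q)R is compact for every φ ∈ C₀(X), and (ii) ±R ≤ θ(Q) for some nonnegative θ ∈ C₀(X). Then R is compact. -/

import Mathlib

open scoped ZeroAtInfty

/-!
The form `⟪T v, w⟫` controls `⟪R v, w⟫` when `±R ≤ T`: as for positive operators,
`‖⟪R v, w⟫‖² ≤ ⟪T v, v⟫ ⟪T w, w⟫`. Taking `w = R v` gives `‖R v‖³ ≤ ‖T‖ ‖v‖² ‖T (R v)‖`, hence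
`‖R v‖ ≤ ε ‖v‖ + C_ε ‖T (R v)‖` for every `ε > 0`. So if `T R` is compact, finite nets for the
image of the unit ball under `T R` yield finite nets for its image under `R`. The
theorem is the case `T = θ(Q)`.
-/

theorem totallyBounded_image_of_forall_dist_lt {α β γ : Type*} [PseudoMetricSpace β]
    [PseudoMetricSpace γ] {f : α → β} {g : α → γ} {s : Set α}
    (hf : TotallyBounded (f '' s))
    (h : ∀ ε > 0, ∃ δ > 0, ∀ x ∈ s, ∀ y ∈ s, dist (f x) (f y) < δ → dist (g x) (g y) < ε) :
    TotallyBounded (g '' s) := by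
  refine Metric.totallyBounded_iff.2 fun ε hε => ?_
  obtain ⟨δ, hδ, hfg⟩ := h ε hε
  obtain ⟨u, hus, hu, hcover⟩ := Metric.finite_approx_of_totallyBounded hf δ hδ
  obtain ⟨t, hts, ht, rfl⟩ := hu.exists_subset_finite_image_eq hus
  refine ⟨g '' t, ht.image g, ?_⟩
  rintro _ ⟨x, hx, rfl⟩
  obtain ⟨y, hy, hxy⟩ : ∃ y ∈ t, dist (f x) (f y) < δ := by
    simpa using hcover (Set.mem_image_of_mem f hx)
  exact Set.mem_biUnion (Set.mem_image_of_mem g hy) (hfg x hx y (hts hy) hxy)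

theorem isCompactOperator_of_forall_norm_le_add {𝕜 E F G : Type*} [NontriviallyNormedField 𝕜]
    [SeminormedAddCommGroup E] [NormedSpace 𝕜 E] [SeminormedAddCommGroup F] [NormedSpace 𝕜 F]
    [SeminormedAddCommGroup G] [NormedSpace 𝕜 G] [CompleteSpace G]
    {S : E →ₗ[𝕜] F} {R : E →ₗ[𝕜] G}
    (hS : IsCompactOperator S) (h : ∀ ε > 0, ∃ C, ∀ x, ‖R x‖ ≤ ε * ‖x‖ + C * ‖S x‖) :
    IsCompactOperator R := by
  obtain ⟨K, hK, hSK⟩ := hS.image_ball_subset_compact 1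
  suffices hR : TotallyBounded (R '' Metric.ball 0 1) from
    (isCompactOperator_iff_image_ball_subset_compact R one_pos).2
      ⟨_, hR.closure.isCompact_of_isClosed isClosed_closure, subset_closure⟩
  refine totallyBounded_image_of_forall_dist_lt (hK.totallyBounded.subset hSK) fun ε hε => ?_
  obtain ⟨C, hC⟩ := h (ε / 4) (by positivity)
  refine ⟨ε / (2 * (|C| + 1)), by positivity, fun x hx y hy hxy => ?_⟩
  rw [dist_eq_norm, ← map_sub] at hxy ⊢
  rw [mem_ball_zero_iff] at hx hy
  have hdiam : ‖x - y‖ < 2 := (norm_sub_le x y).trans_lt (by linarith)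
  have hSxy : (|C| + 1) * ‖S (x - y)‖ < ε / 2 := by
    rw [lt_div_iff₀ (by positivity)] at hxy
    linarith
  calc ‖R (x - y)‖ ≤ ε / 4 * ‖x - y‖ + C * ‖S (x - y)‖ := hC _
    _ ≤ ε / 4 * ‖x - y‖ + (|C| + 1) * ‖S (x - y)‖ := by
      gcongr
      linarith [le_abs_self C]
    _ < ε / 4 * 2 + ε / 2 := by gcongr
    _ = ε := by ring

section InnerProductSpace

open RCLike ComplexConjugate

variable {𝕜 E : Type*} [RCLike 𝕜] [NormedAddCommGroup E] [InnerProductSpace 𝕜 E]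

section LinearMap

variable {R T : E →ₗ[𝕜] E}

theorem two_mul_re_inner_le_add_of_isPositive_sub_add (h1 : (T - R).IsPositive)
    (h2 : (T + R).IsPositive) (v w : E) :
    2 * re (inner 𝕜 (R v) w) ≤ re (inner 𝕜 (T v) v) + re (inner 𝕜 (T w) w) := by
  have hsum := h1.re_inner_nonneg_left (v + w)
  have hdiff := h2.re_inner_nonneg_left (v - w)
  have h1_symm := congrArg re (h1.isSymmetric w v)
  have h2_symm := congrArg re (h2.isSymmetric w v)
  rw [inner_re_symm w] at h1_symm h2_symm
  simp only [LinearMap.sub_apply, LinearMap.add_apply, map_add, map_sub, inner_add_left,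
    inner_add_right, inner_sub_left, inner_sub_right] at hsum hdiff h1_symm h2_symm
  linarith

theorem norm_inner_sq_le_of_isPositive_sub_add (h1 : (T - R).IsPositive)
    (h2 : (T + R).IsPositive) (v w : E) :
    ‖inner 𝕜 (R v) w‖ ^ 2 ≤ re (inner 𝕜 (T v) v) * re (inner 𝕜 (T w) w) := by
  obtain ⟨c, hc_norm, hc_inner⟩ := exists_norm_eq_mul_self (inner 𝕜 (R v) w)
  have hquad (t : ℝ) : 0 ≤ re (inner 𝕜 (T v) v) * (t * t) + -2 * ‖inner 𝕜 (R v) w‖ * t +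
      re (inner 𝕜 (T w) w) := by
    let a : 𝕜 := t * conj c
    have hR : re (inner 𝕜 (R (a • v)) w) = t * ‖inner 𝕜 (R v) w‖ := by
      rw [map_smul, inner_smul_left, map_mul conj, conj_ofReal, conj_conj, mul_assoc, ← hc_inner,
        re_ofReal_mul, ofReal_re]
    have hT : re (inner 𝕜 (T (a • v)) (a • v)) = t * t * re (inner 𝕜 (T v) v) := by
      rw [map_smul, inner_smul_left, inner_smul_right, ← mul_assoc, RCLike.conj_mul, norm_mul,
        norm_conj, hc_norm, mul_one, norm_ofReal, ← ofReal_pow, sq_abs, re_ofReal_mul, sq]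
    have hpolar := two_mul_re_inner_le_add_of_isPositive_sub_add h1 h2 (a • v) w
    rw [hR, hT] at hpolar
    linarith
  have hdiscrim := discrim_le_zero hquad
  rw [discrim] at hdiscrim
  linarith

end LinearMap

section ContinuousLinearMap

variable {R T : E →L[𝕜] E}

theorem norm_pow_three_le_of_isPositive_sub_add (h1 : (T - R).IsPositive)
    (h2 : (T + R).IsPositive) (v : E) : ‖R v‖ ^ 3 ≤ ‖T‖ * ‖v‖ ^ 2 * ‖T (R v)‖ := by
  rcases (norm_nonneg (R v)).eq_or_lt with hRv | hRv
  · rw [← hRv, zero_pow three_ne_zero]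
    positivity
  have hnonneg (w : E) : 0 ≤ re (inner 𝕜 (T w) w) := by
    simpa using
      two_mul_re_inner_le_add_of_isPositive_sub_add h1.toLinearMap h2.toLinearMap 0 w
  refine le_of_mul_le_mul_right ?_ hRv
  calc ‖R v‖ ^ 3 * ‖R v‖ = ‖inner 𝕜 (R v) (R v)‖ ^ 2 := by
        rw [inner_self_eq_norm_sq_to_K, norm_pow, norm_ofReal, abs_norm]
        ring
    _ ≤ re (inner 𝕜 (T v) v) * re (inner 𝕜 (T (R v)) (R v)) :=
      norm_inner_sq_le_of_isPositive_sub_add h1.toLinearMap h2.toLinearMap v (R v)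
    _ ≤ ‖T‖ * ‖v‖ * ‖v‖ * (‖T (R v)‖ * ‖R v‖) := by
      gcongr
      · exact hnonneg (R v)
      · exact (re_inner_le_norm _ _).trans (by gcongr; exact T.le_opNorm v)
      · exact re_inner_le_norm _ _
    _ = ‖T‖ * ‖v‖ ^ 2 * ‖T (R v)‖ * ‖R v‖ := by ring

theorem norm_le_add_of_isPositive_sub_add (h1 : (T - R).IsPositive) (h2 : (T + R).IsPositive)
    {ε : ℝ} (hε : 0 < ε) (v : E) : ‖R v‖ ≤ ε * ‖v‖ + ‖T‖ / ε ^ 2 * ‖T (R v)‖ := by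
  rcases le_or_gt ‖R v‖ (ε * ‖v‖) with hle | hlt
  · exact hle.trans (le_add_of_nonneg_right (by positivity))
  have hv : 0 < ‖v‖ := by
    refine norm_pos_iff.2 fun hv => ?_
    simp [hv] at hlt
  have hmul : ‖R v‖ * ε ^ 2 ≤ ‖T‖ * ‖T (R v)‖ := by
    refine le_of_mul_le_mul_right ?_ (pow_pos hv 2)
    calc ‖R v‖ * ε ^ 2 * ‖v‖ ^ 2 = ‖R v‖ * (ε * ‖v‖) ^ 2 := by ring
      _ ≤ ‖R v‖ * ‖R v‖ ^ 2 := by gcongr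
      _ = ‖R v‖ ^ 3 := by ring
      _ ≤ ‖T‖ * ‖v‖ ^ 2 * ‖T (R v)‖ := norm_pow_three_le_of_isPositive_sub_add h1 h2 v
      _ = ‖T‖ * ‖T (R v)‖ * ‖v‖ ^ 2 := by ring
  calc ‖R v‖ ≤ ‖T‖ * ‖T (R v)‖ / ε ^ 2 := (le_div_iff₀ (by positivity)).2 hmul
    _ = ‖T‖ / ε ^ 2 * ‖T (R v)‖ := by ring
    _ ≤ ε * ‖v‖ + ‖T‖ / ε ^ 2 * ‖T (R v)‖ := le_add_of_nonneg_left (by positivity)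

theorem stmt4_general [CompleteSpace E] (hcomp : IsCompactOperator (T ∘L R))
    (h1 : (T - R).IsPositive) (h2 : (T + R).IsPositive) : IsCompactOperator R :=
  isCompactOperator_of_forall_norm_le_add (S := (T ∘L R : E →L[𝕜] E).toLinearMap)
    (R := R.toLinearMap) hcomp fun _ hε => ⟨_, norm_le_add_of_isPositive_sub_add h1 h2 hε⟩

end ContinuousLinearMap

end InnerProductSpace

/-- **Compactness criterion.** Let `φ ↦ φ(Q)` be a nondegenerate *-homomorphism from
`C₀(X)` into `B(H)`. If `R` is a bounded self-adjoint operator such that `φ(Q)R` is compact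
for all `φ ∈ C₀(X)`, and `±R ≤ θ(Q)` for some nonnegative `θ ∈ C₀(X)`, then `R` is compact. -/
theorem stmt4 {X : Type*} [TopologicalSpace X] [LocallyCompactSpace X] [T2Space X]
    {H : Type*} [NormedAddCommGroup H] [InnerProductSpace ℂ H] [CompleteSpace H]
    (Φ : C₀(X, ℂ) →⋆ₙₐ[ℂ] (H →L[ℂ] H))
    (hnd : Dense (Submodule.span ℂ {y : H | ∃ (φ : C₀(X, ℂ)) (f : H), Φ φ f = y} : Set H))
    (R : H →L[ℂ] H) (hR : IsSelfAdjoint R)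
    (hcomp : ∀ φ : C₀(X, ℂ), IsCompactOperator ⇑(Φ φ ∘L R))
    (θ : C₀(X, ℂ)) (hθ : ∀ x, ∃ t : ℝ, 0 ≤ t ∧ θ x = t)
    (h1 : (Φ θ - R).IsPositive) (h2 : (Φ θ + R).IsPositive) :
    IsCompactOperator ⇑R :=
  stmt4_general (hcomp θ) h1 h2
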